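/- Polygon inequalities: let n ≥ 2 and let ρ_1, …, ρ_n be one-qubit density matrices (2×2 positive semidefinite complex matrices of trace 1), and let λ_i denote the smaller eigenvalue of ρ_i. Then there exists a unit vector Ψ ∈ (ℂ^2)^{⊗n} (an n-qubit pure state) whose one-qubit reduced states are ρ_1, …, ρ_n if and only if λ_i ≤ Σ_{j≠i} λ_j for every i. -/

import Mathlib

open scoped Matrix ComplexOrder

/-- The one-qubit reduced state at site `i` of an `n`-qubit vector `Ψ`:
`ρ_i[a,b] = Σ Ψ_x conj(Ψ_y)`, the sum over pairs `x, y ∈ {0,1}ⁿ` with `x_i = a`,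
`y_i = b` and `x_j = y_j` for `j ≠ i`. -/
noncomputable def qubitReduced {n : ℕ} (i : Fin n) (Ψ : (Fin n → Bool) → ℂ) :
    Matrix Bool Bool ℂ :=
  Matrix.of fun a b =>
    ∑ x ∈ Finset.univ.filter (fun x : Fin n → Bool => x i = a),
      Ψ x * (starRingEnd ℂ) (Ψ (Function.update x i b))

/-!
A local unitary `⨂ Vᵢ` conjugates the reduced states by the `Vᵢ`, so one may assume that
`ρᵢ = diag(1 - λᵢ, λᵢ)` for all `i`.

*Necessity.* The reduced state `ρᵢ` is a sum of the rank-one matrices `φ φ*`, one for each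
configuration of the other qubits. For the all-zero configuration, `φ φ* ≤ ρᵢ ≤ 1 - λᵢ` gives
`‖φ‖² ≤ 1 - λᵢ`: with probability at least `λᵢ`, measuring all qubits finds a one outside `i`. By
the union bound this probability is at most `∑_{j ≠ i} λⱼ`.

*Sufficiency.* If `P` is a probability distribution on the bit strings of even parity, then the
reduced states of `∑ₓ √P(x) |x⟩` are diagonal, because changing a single bit changes the parity. So
it suffices to write `λ` as a convex combination of the even vertices of the cube. By separation
this amounts to maximising a linear form `c` over these vertices: start from the best vertex of the
cube and, if it is odd, flip the coordinate with the smallest `|cₖ|`. The loss is at most `|cₖ|`,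
which is paid for because the polygon inequalities put `λ` at `ℓ¹`-distance at least `1` from every
odd vertex.
-/

open Finset Function Matrix

section BitStrings

variable {ι α M : Type*} [Fintype ι] [DecidableEq ι] [Fintype α] [DecidableEq α] [AddCommMonoid M]

lemma sum_filter_apply_eq_comp_update (F : (ι → α) → M) (i : ι) (a b : α) :
    ∑ x with x i = a, F (update x i b) = ∑ x with x i = b, F x := by
  refine sum_nbij' (update · i b) (update · i a) ?_ ?_ ?_ ?_ ?_ <;> simp +contextual

lemma sum_filter_forall_ne_eq_sum_update (F : (ι → α) → M) (i : ι) (y : ι → α) :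
    ∑ x with ∀ j ≠ i, x j = y j, F x = ∑ a, F (update y i a) := by
  refine (sum_nbij' (update y i) (· i) ?_ ?_ ?_ ?_ ?_).symm <;>
    simp +contextual [update_eq_iff]

lemma sum_le_sum_update_add_sum_marginals {P : (ι → α) → ℝ} (hP : ∀ x, 0 ≤ P x) (i : ι)
    (y : ι → α) :
    ∑ x, P x ≤ ∑ a, P (update y i a) + ∑ j ∈ univ.erase i, ∑ x with x j ≠ y j, P x := by
  simp_rw [← sum_filter_forall_ne_eq_sum_update P, sum_filter]
  rw [sum_comm, ← sum_add_distrib]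
  refine sum_le_sum fun x _ ↦ ?_
  have terms_nonneg : ∀ j ∈ univ.erase i, 0 ≤ if x j ≠ y j then P x else 0 := fun j _ ↦ by
    split_ifs <;> simp [hP]
  by_cases hx : ∀ j ≠ i, x j = y j
  · rw [if_pos hx]
    exact le_add_of_nonneg_right (sum_nonneg terms_nonneg)
  · rw [if_neg hx, zero_add]
    push Not at hx
    obtain ⟨j, hji, hj⟩ := hx
    simpa [hj] using single_le_sum terms_nonneg (mem_erase.2 ⟨hji, mem_univ j⟩)

lemma even_card_update_not_iff (x : ι → Bool) (k : ι) :
    Even #{i | update x k (!x k) i} ↔ ¬ Even #{i | x i} := by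
  have card_split (z : ι → Bool) : #{i | z i} = #{i ∈ univ.erase k | z i} + (z k).toNat := by
    rw [card_filter, card_filter, ← sum_erase_add _ _ (mem_univ k)]
    cases z k <;> simp
  have filter_eq : {i ∈ univ.erase k | update x k (!x k) i} = {i ∈ univ.erase k | x i} :=
    filter_congr fun i hi ↦ by rw [update_of_ne (ne_of_mem_erase hi)]
  rw [card_split, card_split x, filter_eq, update_self]
  cases x k <;> simp [Nat.even_add_one]

end BitStrings

section PiKronecker

variable {ι R : Type*} [Fintype ι] [CommSemiring R]

/-- The Kronecker product `⨂ᵢ A i` of a finite family of matrices, acting on vectors indexed by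
dependent functions rather than on an abstract tensor product. -/
def piKronecker {l m : ι → Type*} (A : ∀ i, Matrix (l i) (m i) R) :
    Matrix (∀ i, l i) (∀ i, m i) R :=
  of fun x y ↦ ∏ i, A i (x i) (y i)

lemma piKronecker_one {m : ι → Type*} [∀ i, DecidableEq (m i)] :
    piKronecker (1 : ∀ i, Matrix (m i) (m i) R) = 1 := by
  ext x y
  simp [piKronecker, one_apply, Fintype.prod_ite_zero, funext_iff]

lemma piKronecker_mul {l m p : ι → Type*} [DecidableEq ι] [∀ i, Fintype (m i)]
    (A : ∀ i, Matrix (l i) (m i) R) (B : ∀ i, Matrix (m i) (p i) R) :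
    piKronecker A * piKronecker B = piKronecker fun i ↦ A i * B i := by
  ext x y
  simp [piKronecker, mul_apply, Fintype.prod_sum, prod_mul_distrib]

lemma conjTranspose_piKronecker [StarRing R] {l m : ι → Type*} (A : ∀ i, Matrix (l i) (m i) R) :
    (piKronecker A)ᴴ = piKronecker fun i ↦ (A i)ᴴ := by
  ext x y
  simp [piKronecker, star_prod]

lemma piKronecker_mulSingle_mulVec {α : Type*} [DecidableEq ι] [Fintype α] [DecidableEq α] (i : ι)
    (A : Matrix α α R) (v : (ι → α) → R) (x : ι → α) :
    (piKronecker (Pi.mulSingle i A) *ᵥ v) x = ∑ a, A (x i) a * v (update x i a) := by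
  have entry (y : ι → α) : piKronecker (Pi.mulSingle i A) x y =
      if ∀ j ≠ i, y j = x j then A (x i) (y i) else 0 := by
    rw [piKronecker, of_apply, ← mul_prod_erase _ _ (mem_univ i), Pi.mulSingle_eq_same,
      prod_congr rfl fun j hj ↦ by
        rw [Pi.mulSingle_eq_of_ne (ne_of_mem_erase hj), one_apply], prod_ite_zero]
    simp [eq_comm]
  simp_rw [mulVec, dotProduct, entry, ite_mul, zero_mul, ← sum_filter]
  simpa using sum_filter_forall_ne_eq_sum_update (fun y ↦ A (x i) (y i) * v y) i x

end PiKronecker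

section LocalUnitary

variable {ι α R : Type*} [Fintype ι] [DecidableEq ι] [Fintype α] [DecidableEq α] [CommRing R]
  [StarRing R]

lemma piKronecker_mem_unitaryGroup (V : ι → unitaryGroup α R) :
    piKronecker (fun i ↦ (V i : Matrix α α R)) ∈ unitaryGroup (ι → α) R := by
  simp_rw [mem_unitaryGroup_iff, star_eq_conjTranspose, conjTranspose_piKronecker,
    piKronecker_mul, ← star_eq_conjTranspose, Unitary.mul_star_self_of_mem (V _).2]
  exact piKronecker_one

lemma conjTranspose_piKronecker_mul_mulSingle_mul (V : ι → unitaryGroup α R) (i : ι)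
    (A : Matrix α α R) :
    (piKronecker fun j ↦ (V j : Matrix α α R))ᴴ * piKronecker (Pi.mulSingle i A) *
        piKronecker (fun j ↦ (V j : Matrix α α R)) =
      piKronecker (Pi.mulSingle i ((V i : Matrix α α R)ᴴ * A * (V i : Matrix α α R))) := by
  rw [conjTranspose_piKronecker, piKronecker_mul, piKronecker_mul]
  congr 1 with j : 1
  obtain rfl | hj := eq_or_ne j i
  · simp only [Pi.mulSingle_eq_same]
  · rw [Pi.mulSingle_eq_of_ne hj, Pi.mulSingle_eq_of_ne hj, mul_one, ← star_eq_conjTranspose]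
    exact Unitary.star_mul_self_of_mem (V j).2

end LocalUnitary

section HermitianMatrix

variable {n 𝕜 : Type*} [Fintype n] [DecidableEq n] [RCLike 𝕜]

lemma exists_unitary_conj_diagonal_eigenvalues_comp_perm {A : Matrix n n 𝕜} (hA : A.IsHermitian)
    (σ : Equiv.Perm n) :
    ∃ V : unitaryGroup n 𝕜,
      A = V * diagonal (fun i ↦ (hA.eigenvalues (σ i) : 𝕜)) * (V : Matrix n n 𝕜)ᴴ := by
  let U : Matrix n n 𝕜 := (hA.eigenvectorUnitary : Matrix n n 𝕜)
  have permuted_mem : U.submatrix id σ ∈ unitaryGroup n 𝕜 := by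
    rw [mem_unitaryGroup_iff, star_eq_conjTranspose, conjTranspose_submatrix, submatrix_mul_equiv,
      ← star_eq_conjTranspose, Unitary.mul_star_self_of_mem hA.eigenvectorUnitary.2,
      submatrix_id_id]
  refine ⟨⟨_, permuted_mem⟩, ?_⟩
  have diagonal_comp : diagonal (fun i ↦ (hA.eigenvalues (σ i) : 𝕜)) =
      (diagonal (RCLike.ofReal ∘ hA.eigenvalues)).submatrix σ σ := by
    rw [submatrix_diagonal_equiv]; rfl
  rw [diagonal_comp, conjTranspose_submatrix, submatrix_mul_equiv, submatrix_mul_equiv,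
    submatrix_id_id, ← star_eq_conjTranspose]
  exact hA.spectral_theorem.trans (Unitary.conjStarAlgAut_apply _ _)

lemma sum_norm_sq_le_of_posSemidef_smul_one_sub_vecMulVec {r : ℝ} (hr : 0 ≤ r) {v : n → 𝕜}
    (h : ((r : 𝕜) • 1 - vecMulVec v (star v)).PosSemidef) : ∑ i, ‖v i‖ ^ 2 ≤ r := by
  set s : ℝ := ∑ i, ‖v i‖ ^ 2 with hs
  have star_dotProduct_self : star v ⬝ᵥ v = (s : 𝕜) := by
    simp [hs, dotProduct, RCLike.conj_mul]
  have quadratic_form : (0 : 𝕜) ≤ ((r * s - s * s : ℝ) : 𝕜) := by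
    have := h.dotProduct_mulVec_nonneg v
    simpa [sub_mulVec, smul_mulVec, vecMulVec_mulVec, star_dotProduct_self] using this
  have : 0 ≤ r * s - s * s := by exact_mod_cast quadratic_form
  nlinarith

end HermitianMatrix

section ReducedState

variable {n : ℕ}

/-- The unnormalised state of qubit `i` that `Ψ` leaves when the other qubits are found in the
configuration `x`. The bit `x i` is ignored. -/
def qubitSlice (i : Fin n) (Ψ : (Fin n → Bool) → ℂ) (x : Fin n → Bool) : Bool → ℂ :=
  fun a ↦ Ψ (update x i a)

lemma qubitReduced_eq_sum_vecMulVec (i : Fin n) (Ψ : (Fin n → Bool) → ℂ) (c : Bool) :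
    qubitReduced i Ψ =
      ∑ x with x i = c, vecMulVec (qubitSlice i Ψ x) (star (qubitSlice i Ψ x)) := by
  ext a b
  rw [Matrix.sum_apply, qubitReduced, of_apply, ← sum_filter_apply_eq_comp_update _ i c a]
  simp [vecMulVec_apply, qubitSlice]

lemma trace_mul_qubitReduced (i : Fin n) (A : Matrix Bool Bool ℂ) (Ψ : (Fin n → Bool) → ℂ) :
    (A * qubitReduced i Ψ).trace = star Ψ ⬝ᵥ (piKronecker (Pi.mulSingle i A) *ᵥ Ψ) := by
  rw [dotProduct, ← sum_fiberwise (g := fun x ↦ x i)]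
  refine sum_congr rfl fun a _ ↦ ?_
  rw [Matrix.diag_apply, qubitReduced_eq_sum_vecMulVec i Ψ a, Matrix.mul_sum, Matrix.sum_apply]
  refine sum_congr rfl fun x hx ↦ ?_
  obtain rfl : x i = a := (mem_filter.1 hx).2
  rw [piKronecker_mulSingle_mulVec, mul_apply, mul_sum]
  refine sum_congr rfl fun b _ ↦ ?_
  simp only [vecMulVec_apply, qubitSlice, Pi.star_apply, update_eq_self]
  ring

lemma qubitReduced_apply_self (i : Fin n) (Ψ : (Fin n → Bool) → ℂ) (a : Bool) :
    qubitReduced i Ψ a a = ((∑ x with x i = a, ‖Ψ x‖ ^ 2 : ℝ) : ℂ) := by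
  rw [qubitReduced, of_apply, Complex.ofReal_sum]
  refine sum_congr rfl fun x hx ↦ ?_
  obtain rfl : x i = a := (mem_filter.1 hx).2
  rw [update_eq_self, Complex.mul_conj', Complex.ofReal_pow]

lemma qubitReduced_eq_diagonal_of_even {Ψ : (Fin n → Bool) → ℂ}
    (hΨ : ∀ x, ¬ Even #{j | x j} → Ψ x = 0) (i : Fin n) :
    qubitReduced i Ψ = diagonal fun a ↦ ((∑ x with x i = a, ‖Ψ x‖ ^ 2 : ℝ) : ℂ) := by
  ext a b
  obtain rfl | hab := eq_or_ne b a
  · rw [diagonal_apply_eq, qubitReduced_apply_self]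
  rw [diagonal_apply_ne' _ hab, qubitReduced, of_apply]
  refine sum_eq_zero fun x hx ↦ ?_
  have flip : b = !x i := by rw [(mem_filter.1 hx).2]; exact Bool.eq_not_of_ne hab
  by_cases hx : Even #{j | x j}
  · rw [hΨ (update x i b) (by rwa [flip, even_card_update_not_iff, not_not]), map_zero, mul_zero]
  · rw [hΨ x hx, zero_mul]

lemma posSemidef_qubitReduced_sub_vecMulVec_qubitSlice (i : Fin n) (Ψ : (Fin n → Bool) → ℂ)
    (x : Fin n → Bool) :
    (qubitReduced i Ψ - vecMulVec (qubitSlice i Ψ x) (star (qubitSlice i Ψ x))).PosSemidef := by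
  rw [qubitReduced_eq_sum_vecMulVec i Ψ (x i),
    ← add_sum_erase (a := x) _ _ (by simp), add_sub_cancel_left]
  exact posSemidef_sum _ fun y _ ↦ posSemidef_vecMulVec_self_star _

lemma qubitReduced_piKronecker_mulVec (V : Fin n → unitaryGroup Bool ℂ) (i : Fin n)
    (Ψ : (Fin n → Bool) → ℂ) :
    qubitReduced i ((piKronecker fun j ↦ (V j : Matrix Bool Bool ℂ)) *ᵥ Ψ) =
      (V i : Matrix Bool Bool ℂ) * qubitReduced i Ψ * (V i : Matrix Bool Bool ℂ)ᴴ := by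
  refine ext_iff_trace_mul_left.2 fun A ↦ ?_
  rw [trace_mul_qubitReduced, star_mulVec, ← dotProduct_mulVec, mulVec_mulVec, mulVec_mulVec,
    ← Matrix.mul_assoc, conjTranspose_piKronecker_mul_mulSingle_mul, ← trace_mul_qubitReduced,
    ← Matrix.mul_assoc, trace_mul_comm _ ((V i : Matrix Bool Bool ℂ)ᴴ)]
  simp only [Matrix.mul_assoc]

end ReducedState

section PureCompatible

variable {n : ℕ}

/-- The quantum marginal property: the matrices `σ i` are the one-qubit reduced states of a common
pure state of `n` qubits. -/
def PureCompatible (σ : Fin n → Matrix Bool Bool ℂ) : Prop :=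
  ∃ Ψ : (Fin n → Bool) → ℂ, star Ψ ⬝ᵥ Ψ = 1 ∧ ∀ i, σ i = qubitReduced i Ψ

lemma PureCompatible.conj_unitary {σ : Fin n → Matrix Bool Bool ℂ} (h : PureCompatible σ)
    (V : Fin n → unitaryGroup Bool ℂ) :
    PureCompatible fun i ↦ (V i : Matrix Bool Bool ℂ) * σ i * (V i : Matrix Bool Bool ℂ)ᴴ := by
  obtain ⟨Ψ, hΨ, hσ⟩ := h
  refine ⟨(piKronecker fun j ↦ (V j : Matrix Bool Bool ℂ)) *ᵥ Ψ, ?_, fun i ↦ ?_⟩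
  · rw [star_mulVec, ← dotProduct_mulVec, mulVec_mulVec, ← star_eq_conjTranspose,
      mem_unitaryGroup_iff'.1 (piKronecker_mem_unitaryGroup V), one_mulVec, hΨ]
  · rw [qubitReduced_piKronecker_mulVec, ← hσ]

lemma pureCompatible_conj_unitary_iff {σ : Fin n → Matrix Bool Bool ℂ}
    (V : Fin n → unitaryGroup Bool ℂ) :
    PureCompatible (fun i ↦ (V i : Matrix Bool Bool ℂ) * σ i * (V i : Matrix Bool Bool ℂ)ᴴ) ↔
      PureCompatible σ := by
  refine ⟨fun h ↦ ?_, fun h ↦ h.conj_unitary V⟩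
  have unconj (i : Fin n) : ((star (V i) : unitaryGroup Bool ℂ) : Matrix Bool Bool ℂ) *
      ((V i : Matrix Bool Bool ℂ) * σ i * (V i : Matrix Bool Bool ℂ)ᴴ) *
        ((star (V i) : unitaryGroup Bool ℂ) : Matrix Bool Bool ℂ)ᴴ = σ i := by
    have star_mul_self : (V i : Matrix Bool Bool ℂ)ᴴ * V i = 1 := mem_unitaryGroup_iff'.1 (V i).2
    rw [Unitary.coe_star, star_eq_conjTranspose, conjTranspose_conjTranspose, Matrix.mul_assoc,
      Matrix.mul_assoc, star_mul_self, Matrix.mul_one, ← Matrix.mul_assoc, star_mul_self,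
      Matrix.one_mul]
  simpa only [unconj] using h.conj_unitary fun i ↦ star (V i)

end PureCompatible

section BitDist

/-- The distribution of a random bit that equals `true` with probability `p`. For `p ≤ 1 / 2` these
are the eigenvalues of a one-qubit density matrix whose smaller eigenvalue is `p`. -/
def bitDist (p : ℝ) (b : Bool) : ℝ := if b then p else 1 - p

variable {𝕜 : Type*} [RCLike 𝕜] {A : Matrix Bool Bool 𝕜}

lemma eigenvalues_false_add_true (hA : A.IsHermitian) (htr : A.trace = 1) :
    hA.eigenvalues false + hA.eigenvalues true = 1 := by
  have := hA.trace_eq_sum_eigenvalues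
  rw [htr, Fintype.sum_bool, add_comm] at this
  exact_mod_cast this.symm

lemma min_eigenvalues_le_half (hA : A.IsHermitian) (htr : A.trace = 1) :
    min (hA.eigenvalues false) (hA.eigenvalues true) ≤ 1 / 2 := by
  have := eigenvalues_false_add_true hA htr
  rw [min_le_iff]
  by_contra! h
  linarith

lemma exists_unitary_conj_diagonal_bitDist (hA : A.IsHermitian) (htr : A.trace = 1) :
    ∃ V : unitaryGroup Bool 𝕜, A = (V : Matrix Bool Bool 𝕜) *
      diagonal (fun b ↦ (bitDist (min (hA.eigenvalues false) (hA.eigenvalues true)) b : 𝕜)) *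
        (V : Matrix Bool Bool 𝕜)ᴴ := by
  suffices h : ∃ σ : Equiv.Perm Bool, ∀ b, hA.eigenvalues (σ b) =
      bitDist (min (hA.eigenvalues false) (hA.eigenvalues true)) b by
    obtain ⟨σ, hσ⟩ := h
    simpa only [hσ] using exists_unitary_conj_diagonal_eigenvalues_comp_perm hA σ
  have sum_one := eigenvalues_false_add_true hA htr
  rcases le_total (hA.eigenvalues true) (hA.eigenvalues false) with hle | hle
  · refine ⟨1, Bool.forall_bool.2 ?_⟩
    simp only [min_eq_right hle, bitDist]
    exact ⟨eq_sub_of_add_eq sum_one, rfl⟩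
  · refine ⟨Equiv.boolNot, Bool.forall_bool.2 ?_⟩
    simp only [min_eq_left hle, bitDist]
    exact ⟨eq_sub_of_add_eq' sum_one, rfl⟩

end BitDist

section Necessity

variable {n : ℕ} {Ψ : (Fin n → Bool) → ℂ} {l : Fin n → ℝ}

lemma sum_norm_sq_update_le {i : Fin n} {r : ℝ} (hr : 0 ≤ r)
    (h : ((r : ℂ) • 1 - qubitReduced i Ψ).PosSemidef) (x : Fin n → Bool) :
    ∑ a, ‖Ψ (update x i a)‖ ^ 2 ≤ r := by
  refine sum_norm_sq_le_of_posSemidef_smul_one_sub_vecMulVec (v := qubitSlice i Ψ x) hr ?_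
  simpa using h.add (posSemidef_qubitReduced_sub_vecMulVec_qubitSlice i Ψ x)

lemma posSemidef_one_sub_smul_one_sub_diagonal_bitDist {p : ℝ} (hp : p ≤ 1 / 2) :
    (((1 - p : ℝ) : ℂ) • 1 - diagonal fun b ↦ (bitDist p b : ℂ)).PosSemidef := by
  rw [smul_one_eq_diagonal, diagonal_sub, posSemidef_diagonal_iff]
  intro b
  rw [← Complex.ofReal_sub, Complex.zero_le_real, sub_nonneg]
  cases b <;> simp only [bitDist, if_true] <;> grind

lemma le_sum_erase_of_qubitReduced_eq_diagonal (hl : ∀ i, l i ≤ 1 / 2) (hΨ : star Ψ ⬝ᵥ Ψ = 1)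
    (h : ∀ i, diagonal (fun b ↦ (bitDist (l i) b : ℂ)) = qubitReduced i Ψ) (i : Fin n) :
    l i ≤ ∑ j ∈ univ.erase i, l j := by
  have total : ∑ x, ‖Ψ x‖ ^ 2 = 1 := by
    have : ((∑ x, ‖Ψ x‖ ^ 2 : ℝ) : ℂ) = 1 := by
      simpa [dotProduct, Complex.conj_mul'] using hΨ
    exact_mod_cast this
  have marginal (j : Fin n) : ∑ x with x j ≠ false, ‖Ψ x‖ ^ 2 = l j := by
    have := congrFun₂ (h j) true true
    rw [qubitReduced_apply_self, diagonal_apply_eq] at this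
    simpa [bitDist] using (Complex.ofReal_injective this).symm
  have slice_le : ∑ a, ‖Ψ (update (fun _ ↦ false) i a)‖ ^ 2 ≤ 1 - l i :=
    sum_norm_sq_update_le (by linarith [hl i])
      (h i ▸ posSemidef_one_sub_smul_one_sub_diagonal_bitDist (hl i)) _
  have union_bound := sum_le_sum_update_add_sum_marginals (P := fun x ↦ ‖Ψ x‖ ^ 2)
    (fun x ↦ sq_nonneg _) i fun _ ↦ false
  simp only [total, marginal] at union_bound
  linarith

end Necessity

section Demicube

lemma exists_weights_of_mem_convexHull_image {α E : Type*} [Fintype α] [AddCommGroup E]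
    [Module ℝ E] {f : α → E} {s : Set α} {p : E} (hp : p ∈ convexHull ℝ (f '' s)) :
    ∃ w : α → ℝ, (∀ a, 0 ≤ w a) ∧ ∑ a, w a = 1 ∧ (∀ a ∉ s, w a = 0) ∧ ∑ a, w a • f a = p := by
  classical
  obtain ⟨κ, _, v, z, hv, hv_sum, hz, rfl⟩ := mem_convexHull_iff_exists_fintype.1 hp
  choose g hg hgz using hz
  refine ⟨fun a ↦ ∑ k with g k = a, v k, fun a ↦ sum_nonneg fun k _ ↦ hv k, ?_, fun a ha ↦ ?_, ?_⟩
  · exact (sum_fiberwise _ _ _).trans hv_sum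
  · refine sum_eq_zero fun k hk ↦ absurd (hg k) ?_
    rwa [(mem_filter.1 hk).2]
  · rw [← sum_fiberwise (g := g)]
    refine sum_congr rfl fun a _ ↦ ?_
    rw [sum_smul]
    refine sum_congr rfl fun k hk ↦ ?_
    rw [← (mem_filter.1 hk).2, hgz]

variable {ι : Type*}

/-- The vertex of the unit cube `[0, 1]^ι` encoded by the bit string `x`. -/
def cubeVertex (x : ι → Bool) : ι → ℝ := fun i ↦ if x i then 1 else 0

lemma cubeVertex_update_not [DecidableEq ι] (x : ι → Bool) (k : ι) :
    cubeVertex (update x k (!x k)) = cubeVertex x - Pi.single k (if x k then 1 else -1) := by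
  ext i
  obtain rfl | hik := eq_or_ne i k
  · cases hx : x i <;> simp [cubeVertex, hx]
  · simp [cubeVertex, hik]

variable [Fintype ι]

lemma mem_convexHull_of_forall_exists_dotProduct_le {s : Set (ι → ℝ)} (hs : s.Finite) {p : ι → ℝ}
    (h : ∀ c : ι → ℝ, ∃ v ∈ s, c ⬝ᵥ p ≤ c ⬝ᵥ v) : p ∈ convexHull ℝ s := by
  classical
  by_contra hp
  obtain ⟨f, u, hf_lt, hf_gt⟩ :=
    geometric_hahn_banach_closed_point (convex_convexHull ℝ s) (hs.isClosed_convexHull ℝ) hp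
  have f_eq (v : ι → ℝ) : f v = (fun i ↦ f (Pi.single i 1)) ⬝ᵥ v := by
    conv_lhs => rw [pi_eq_sum_univ' v]
    simp [dotProduct, mul_comm]
  obtain ⟨v, hvs, hv⟩ := h fun i ↦ f (Pi.single i 1)
  rw [← f_eq, ← f_eq] at hv
  linarith [hf_lt v (subset_convexHull ℝ s hvs)]

/-- The vertices of the demicube: those vertices of the unit cube that have an even number of
coordinates equal to `1`. -/
def evenCubeVertices (ι : Type*) [Fintype ι] : Set (ι → ℝ) :=
  cubeVertex '' {x : ι → Bool | Even #{i | x i}}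

lemma exists_dotProduct_le_evenCubeVertices {p : ι → ℝ} (h0 : ∀ i, 0 ≤ p i) (h1 : ∀ i, p i ≤ 1)
    (hodd : ∀ x : ι → Bool, ¬ Even #{i | x i} → 1 ≤ ∑ i, |cubeVertex x i - p i|) (c : ι → ℝ) :
    ∃ v ∈ evenCubeVertices ι, c ⬝ᵥ p ≤ c ⬝ᵥ v := by
  classical
  set s : ι → Bool := fun i ↦ decide (0 < c i) with hs
  have gain (i : ι) : c i * (cubeVertex s i - p i) = |c i| * |cubeVertex s i - p i| := by
    rw [← abs_mul, eq_comm, abs_eq_self]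
    by_cases hc : 0 < c i
    · simpa [hs, cubeVertex, hc] using mul_nonneg hc.le (sub_nonneg.2 (h1 i))
    · simpa [hs, cubeVertex, hc] using mul_nonpos_of_nonpos_of_nonneg (not_lt.1 hc) (h0 i)
  have total_gain : c ⬝ᵥ cubeVertex s - c ⬝ᵥ p = ∑ i, |c i| * |cubeVertex s i - p i| := by
    rw [← dotProduct_sub]
    exact sum_congr rfl fun i _ ↦ gain i
  by_cases hs_even : Even #{i | s i}
  · refine ⟨_, ⟨s, hs_even, rfl⟩, sub_nonneg.1 ?_⟩
    rw [total_gain]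
    positivity
  have : Nonempty ι := by
    by_contra! hι
    simp at hs_even
  obtain ⟨k, hk⟩ := Finite.exists_min fun i ↦ |c i|
  refine ⟨_, ⟨update s k (!s k), (even_card_update_not_iff s k).2 hs_even, rfl⟩, ?_⟩
  have flip_loss : c ⬝ᵥ cubeVertex (update s k (!s k)) = c ⬝ᵥ cubeVertex s - |c k| := by
    rw [cubeVertex_update_not, dotProduct_sub, dotProduct_single]
    by_cases hc : 0 < c k
    · simp [hs, hc, abs_of_pos hc]
    · simp [hs, hc, abs_of_nonpos (not_lt.1 hc)]
  have le_total_gain : |c k| ≤ ∑ i, |c i| * |cubeVertex s i - p i| :=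
    calc |c k| ≤ |c k| * ∑ i, |cubeVertex s i - p i| :=
          le_mul_of_one_le_right (abs_nonneg _) (hodd s hs_even)
      _ ≤ ∑ i, |c i| * |cubeVertex s i - p i| := by
          rw [mul_sum]
          exact sum_le_sum fun i _ ↦ mul_le_mul_of_nonneg_right (hk i) (abs_nonneg _)
  linarith

lemma one_le_sum_abs_cubeVertex_sub [DecidableEq ι] {p : ι → ℝ} (hp : ∀ i, p i ≤ 1 / 2)
    (hpoly : ∀ i, p i ≤ ∑ j ∈ univ.erase i, p j) {x : ι → Bool} (hx : ¬ Even #{i | x i}) :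
    1 ≤ ∑ i, |cubeVertex x i - p i| := by
  obtain ⟨i, hi⟩ : ∃ i, x i := by
    by_contra! hno
    simp [hno] at hx
  have dist_ge {j : ι} (hj : x j) : 1 - p j ≤ |cubeVertex x j - p j| := by
    simpa [cubeVertex, hj] using le_abs_self (1 - p j)
  rw [← add_sum_erase _ _ (mem_univ i)]
  by_cases hj : ∃ j ≠ i, x j
  · obtain ⟨j, hji, hj⟩ := hj
    have := single_le_sum (f := fun j ↦ |cubeVertex x j - p j|) (fun j _ ↦ abs_nonneg _)
      (mem_erase.2 ⟨hji, mem_univ j⟩)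
    linarith [dist_ge hi, dist_ge hj, hp i, hp j]
  · push Not at hj
    have : ∑ j ∈ univ.erase i, p j ≤ ∑ j ∈ univ.erase i, |cubeVertex x j - p j| :=
      sum_le_sum fun j hj' ↦ by
        simpa [cubeVertex, hj j (ne_of_mem_erase hj')] using le_abs_self (p j)
    linarith [dist_ge hi, hpoly i]

lemma mem_convexHull_evenCubeVertices [DecidableEq ι] {p : ι → ℝ} (h0 : ∀ i, 0 ≤ p i)
    (hp : ∀ i, p i ≤ 1 / 2) (hpoly : ∀ i, p i ≤ ∑ j ∈ univ.erase i, p j) :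
    p ∈ convexHull ℝ (evenCubeVertices ι) :=
  mem_convexHull_of_forall_exists_dotProduct_le ((Set.toFinite _).image _) <|
    exists_dotProduct_le_evenCubeVertices h0 (fun i ↦ (hp i).trans (by norm_num))
      fun _ ↦ one_le_sum_abs_cubeVertex_sub hp hpoly

end Demicube

section Sufficiency

variable {n : ℕ} {l : Fin n → ℝ}

lemma pureCompatible_diagonal_of_mem_convexHull (hl : l ∈ convexHull ℝ (evenCubeVertices (Fin n))) :
    PureCompatible fun i ↦ diagonal fun b ↦ (bitDist (l i) b : ℂ) := by
  obtain ⟨P, hP0, hP1, hP_even, hPl⟩ := exists_weights_of_mem_convexHull_image hl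
  have norm_sq (x : Fin n → Bool) : ‖((√(P x) : ℝ) : ℂ)‖ ^ 2 = P x := by
    rw [Complex.norm_real, Real.norm_eq_abs, sq_abs, Real.sq_sqrt (hP0 x)]
  have marginal_true (i : Fin n) : ∑ x with x i = true, P x = l i := by
    simp [← hPl, cubeVertex, sum_filter]
  have marginal (i : Fin n) (b : Bool) : ∑ x with x i = b, P x = bitDist (l i) b := by
    have total := sum_fiberwise univ (fun x : Fin n → Bool ↦ x i) P
    rw [Fintype.sum_bool, hP1, marginal_true] at total
    cases b
    · simpa [bitDist] using eq_sub_of_add_eq' total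
    · exact marginal_true i
  refine ⟨fun x ↦ (√(P x) : ℝ), ?_, fun i ↦ ?_⟩
  · simp only [dotProduct, Pi.star_apply, RCLike.star_def, Complex.conj_mul']
    exact_mod_cast (sum_congr rfl fun x _ ↦ norm_sq x).trans hP1
  · rw [qubitReduced_eq_diagonal_of_even fun x hx ↦ by rw [hP_even x hx]; simp]
    simp only [norm_sq, marginal]

end Sufficiency

lemma pureCompatible_diagonal_bitDist_iff {n : ℕ} {l : Fin n → ℝ} (h0 : ∀ i, 0 ≤ l i)
    (hl : ∀ i, l i ≤ 1 / 2) :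
    PureCompatible (fun i ↦ diagonal fun b ↦ (bitDist (l i) b : ℂ)) ↔
      ∀ i, l i ≤ ∑ j ∈ univ.erase i, l j :=
  ⟨fun ⟨_, hΨ, h⟩ ↦ le_sum_erase_of_qubitReduced_eq_diagonal hl hΨ h,
    fun h ↦ pureCompatible_diagonal_of_mem_convexHull (mem_convexHull_evenCubeVertices h0 hl h)⟩

/-- Theorem 4 of the paper: polygon inequalities.
One-qubit density matrices `ρ_1, …, ρ_n` (`n ≥ 2`), with `λ_i` the smaller eigenvalue of
`ρ_i`, are the one-qubit reduced states of an `n`-qubit pure state if and only if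
`λ_i ≤ Σ_{j≠i} λ_j` for every `i`. -/
theorem stmt_14 (n : ℕ) (hn : 2 ≤ n)
    (ρ : Fin n → Matrix Bool Bool ℂ)
    (hpsd : ∀ i, (ρ i).PosSemidef) (htr : ∀ i, (ρ i).trace = 1)
    (lam : Fin n → ℝ)
    (hlam : ∀ i, lam i = min ((hpsd i).1.eigenvalues false) ((hpsd i).1.eigenvalues true)) :
    (∃ Ψ : (Fin n → Bool) → ℂ, star Ψ ⬝ᵥ Ψ = 1 ∧ ∀ i, ρ i = qubitReduced i Ψ) ↔
      ∀ i, lam i ≤ ∑ j ∈ Finset.univ.erase i, lam j := by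
  have lam_nonneg (i : Fin n) : 0 ≤ lam i := by
    rw [hlam]
    exact le_min ((hpsd i).eigenvalues_nonneg _) ((hpsd i).eigenvalues_nonneg _)
  have lam_le_half (i : Fin n) : lam i ≤ 1 / 2 := by
    rw [hlam]
    exact min_eigenvalues_le_half (hpsd i).1 (htr i)
  choose V hV using fun i ↦ exists_unitary_conj_diagonal_bitDist (hpsd i).1 (htr i)
  simp_rw [← hlam, RCLike.ofReal_eq_complex_ofReal] at hV
  change PureCompatible ρ ↔ _
  rw [funext hV, pureCompatible_conj_unitary_iff V,
    pureCompatible_diagonal_bitDist_iff lam_nonneg lam_le_half]
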